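/- Let (A, m) be a noetherian local ring with infinite residue field, M a finitely generated A-module with dim M = d > 0, and I_1, ..., I_s ideals of A. Set h = max{ ht((I_j + Ann_A M)/Ann_A M) : j = 1, ..., s }. Then there exists a Rees superficial sequence x_1, ..., x_h of (I_1, ..., I_s) with respect to M which is a part of a system of parameters for M. -/

import Mathlib

open IsLocalRing

section MixedMultDefs

variable (A : Type*) [CommRing A]

/-- The length of an `A`-module `M`, defined as the height of `⊤` in the lattice of
submodules of `M` (i.e. the supremum of lengths of chains of submodules). -/
noncomputable def modLength (M : Type*) [AddCommGroup M] [Module A M] : ℕ∞ :=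
  Order.height (⊤ : Submodule A M)

/-- The length of a module as a natural number (`0` if the length is infinite). -/
noncomputable def lenNat (M : Type*) [AddCommGroup M] [Module A M] : ℕ :=
  (modLength A M).toNat

/-- The height of an ideal: the infimum of the heights of the prime ideals containing it. -/
noncomputable def idealHeight (I : Ideal A) : ℕ∞ :=
  ⨅ (p : PrimeSpectrum A) (_ : I ≤ p.asIdeal), Order.height p

/-- The Krull dimension of a module `M`, i.e. the Krull dimension of `A / Ann_A M`. -/
noncomputable def modDim (M : Type*) [AddCommGroup M] [Module A M] : WithBot ℕ∞ :=
  ringKrullDim (A ⧸ Module.annihilator A M)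

/-- `x` is a Rees superficial element of the family of ideals `I = (I 0, …, I (t-1))` with
respect to `M`, as an element of the ideal `I i`:  `x ∈ I i` and
`xM ∩ I_1^{n_1} ⋯ I_i^{n_i + 1} ⋯ I_t^{n_t} M = x I_1^{n_1} ⋯ I_i^{n_i} ⋯ I_t^{n_t} M`
for all sufficiently large `n i` and arbitrary other exponents. -/
def IsReesSuperficial (M : Type*) [AddCommGroup M] [Module A M] {t : ℕ}
    (I : Fin t → Ideal A) (i : Fin t) (x : A) : Prop :=
  x ∈ I i ∧ ∃ N : ℕ, ∀ n : Fin t → ℕ, N ≤ n i →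
    (Ideal.span {x} • (⊤ : Submodule A M)) ⊓
        ((∏ j, I j ^ (n j + if j = i then 1 else 0)) • (⊤ : Submodule A M)) =
      Ideal.span {x} • ((∏ j, I j ^ (n j)) • (⊤ : Submodule A M))

/-- `x 0, …, x (t-1)` is a Rees superficial sequence of the family `I` with respect to `M`,
where the assignment `c` records to which ideal each element of the sequence belongs:
`x i` is a Rees superficial element of `I`, as an element of `I (c i)`, with respect to
`M / (x 0, …, x (i-1)) M`. -/
def IsReesSuperficialSeq (M : Type*) [AddCommGroup M] [Module A M] {t s : ℕ}
    (I : Fin s → Ideal A) (x : Fin t → A) (c : Fin t → Fin s) : Prop :=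
  ∀ i : Fin t,
    IsReesSuperficial A
      (M ⧸ ((Ideal.span (x '' {j | (j : ℕ) < (i : ℕ)})) • (⊤ : Submodule A M)))
      I (c i) (x i)

/-- The assignment `c` has type `(k 0, …, k (s-1))`: for each `i`, exactly `k i` members of
the sequence are assigned to the ideal indexed by `i`. -/
def OfTypeCount {t s : ℕ} (c : Fin t → Fin s) (k : Fin s → ℕ) : Prop :=
  ∀ i : Fin s, (Finset.univ.filter fun j => c j = i).card = k i

/-- The ideal generated by the members of the sequence `x` assigned (by `c`) to index `i`. -/
def jrIdeal {t s : ℕ} (x : Fin t → A) (c : Fin t → Fin s) (i : Fin s) : Ideal A :=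
  Ideal.span (x '' {j | c j = i})

/-- The defining equation of a joint reduction:  all members of the sequence lie in their
assigned ideals, and `I_1^{n_1+1} ⋯ I_s^{n_s+1} M = Σ_i (𝔍_i) I_1^{n_1+1} ⋯ I_i^{n_i} ⋯
I_s^{n_s+1} M` for all sufficiently large `n_1, …, n_s`, where `𝔍_i` consists of the
members of the sequence assigned to `I i`. -/
def IsJointReductionEq (M : Type*) [AddCommGroup M] [Module A M] {t s : ℕ}
    (I : Fin s → Ideal A) (x : Fin t → A) (c : Fin t → Fin s) : Prop :=
  (∀ j, x j ∈ I (c j)) ∧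
  ∃ N : ℕ, ∀ n : Fin s → ℕ, (∀ i, N ≤ n i) →
    ((∏ i, I i ^ (n i + 1)) • (⊤ : Submodule A M)) =
      ∑ i : Fin s, jrIdeal A x c i •
        ((∏ j, I j ^ (n j + if j = i then 0 else 1)) • (⊤ : Submodule A M))

/-- A joint reduction of the family `I` with respect to `M` of type `k`. -/
def IsJointReduction (M : Type*) [AddCommGroup M] [Module A M] {t s : ℕ}
    (I : Fin s → Ideal A) (x : Fin t → A) (c : Fin t → Fin s) (k : Fin s → ℕ) : Prop :=
  IsJointReductionEq A M I x c ∧ OfTypeCount c k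

/-- `x 1, …, x d` is a system of parameters for `M`:  `d = dim M`, the `x j` lie in the
maximal ideal, and `M / (x 1, …, x d) M` has finite length. -/
def IsSOP [IsLocalRing A] (M : Type*) [AddCommGroup M] [Module A M] {d : ℕ}
    (x : Fin d → A) : Prop :=
  modDim A M = (d : ℕ∞) ∧ (∀ j, x j ∈ maximalIdeal A) ∧
    IsFiniteLength A (M ⧸ ((Ideal.span (Set.range x)) • (⊤ : Submodule A M)))

/-- `e` is the Hilbert–Samuel multiplicity of the ideal `q` on the `d`-dimensional module
`M`: the function `n ↦ ℓ_A(M / q^n M)` is eventually given by a polynomial of degree at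
most `d` with `n^d`-coefficient `e / d!`. -/
def IsHSMult (M : Type*) [AddCommGroup M] [Module A M] (q : Ideal A) (d : ℕ) (e : ℕ) :
    Prop :=
  ∃ P : Polynomial ℚ, P.natDegree ≤ d ∧
    (∃ N : ℕ, ∀ n : ℕ, N ≤ n →
      IsFiniteLength A (M ⧸ (q ^ n • (⊤ : Submodule A M))) ∧
      (lenNat A (M ⧸ (q ^ n • (⊤ : Submodule A M))) : ℚ) = P.eval (n : ℚ)) ∧
    (e : ℚ) = P.coeff d * (Nat.factorial d : ℚ)

/-- The subquotient `J^{n_0} I_1^{n_1} ⋯ I_s^{n_s} M / J^{n_0+1} I_1^{n_1} ⋯ I_s^{n_s} M`. -/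
abbrev mixedSub (M : Type*) [AddCommGroup M] [Module A M] {s : ℕ} (J : Ideal A)
    (I : Fin s → Ideal A) (n : Fin (s + 1) → ℕ) : Submodule A M :=
  (J ^ (n 0) * ∏ i : Fin s, I i ^ (n i.succ)) • (⊤ : Submodule A M)

/-- continued -/
abbrev mixedPiece (M : Type*) [AddCommGroup M] [Module A M] {s : ℕ} (J : Ideal A)
    (I : Fin s → Ideal A) (n : Fin (s + 1) → ℕ) :=
  ↥(mixedSub A M J I n) ⧸
    (Submodule.comap (mixedSub A M J I n).subtype
      ((J ^ (n 0 + 1) * ∏ i : Fin s, I i ^ (n i.succ)) • (⊤ : Submodule A M)))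

/-- `e` is the mixed multiplicity `e_A(J^{[k_0+1]}, I_1^{[k_1]}, …, I_s^{[k_s]}; M)`:
the function `(n_0, …, n_s) ↦ ℓ_A(J^{n_0} I_1^{n_1} ⋯ I_s^{n_s} M / J^{n_0+1} I_1^{n_1}
⋯ I_s^{n_s} M)` is, for all sufficiently large `n_0, …, n_s`, given by a polynomial of
total degree at most `k_0 + k_1 + ⋯ + k_s` whose coefficient of
`n_0^{k_0} n_1^{k_1} ⋯ n_s^{k_s}` is `e / (k_0! k_1! ⋯ k_s!)`. -/
def IsMixedMult (M : Type*) [AddCommGroup M] [Module A M] {s : ℕ} (J : Ideal A)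
    (I : Fin s → Ideal A) (k0 : ℕ) (k : Fin s → ℕ) (e : ℕ) : Prop :=
  ∃ P : MvPolynomial (Fin (s + 1)) ℚ, P.totalDegree ≤ k0 + ∑ i, k i ∧
    (∃ N : ℕ, ∀ n : Fin (s + 1) → ℕ, (∀ i, N ≤ n i) →
      IsFiniteLength A (mixedPiece A M J I n) ∧
      (lenNat A (mixedPiece A M J I n) : ℚ) =
        MvPolynomial.eval (fun i => (n i : ℚ)) P) ∧
    (e : ℚ) = MvPolynomial.coeff (Finsupp.equivFunOnFinite.symm (Fin.cons k0 k)) P *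
      ((Nat.factorial k0 * ∏ i, Nat.factorial (k i) : ℕ) : ℚ)

/-- `e` is the mixed multiplicity `e_A(I_1^{[k_1]}, …, I_s^{[k_s]}; M)` of a family of
`m`-primary ideals: the function `(n_1, …, n_s) ↦ ℓ_A(M / I_1^{n_1} ⋯ I_s^{n_s} M)` is, for
all sufficiently large `n_1, …, n_s`, given by a polynomial of total degree at most
`k_1 + ⋯ + k_s` whose coefficient of `n_1^{k_1} ⋯ n_s^{k_s}` is `e / (k_1! ⋯ k_s!)`. -/
def IsMixedMultPrimary (M : Type*) [AddCommGroup M] [Module A M] {s : ℕ}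
    (I : Fin s → Ideal A) (k : Fin s → ℕ) (e : ℕ) : Prop :=
  ∃ P : MvPolynomial (Fin s) ℚ, P.totalDegree ≤ ∑ i, k i ∧
    (∃ N : ℕ, ∀ n : Fin s → ℕ, (∀ i, N ≤ n i) →
      IsFiniteLength A (M ⧸ ((∏ i, I i ^ (n i)) • (⊤ : Submodule A M))) ∧
      (lenNat A (M ⧸ ((∏ i, I i ^ (n i)) • (⊤ : Submodule A M))) : ℚ) =
        MvPolynomial.eval (fun i => (n i : ℚ)) P) ∧
    (e : ℚ) = MvPolynomial.coeff (Finsupp.equivFunOnFinite.symm k) P *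
      ((∏ i, Nat.factorial (k i) : ℕ) : ℚ)

/-- The submodule `(0_M : I^∞) = ⋃_n (0_M : I^n)` of `M`. -/
def satSub (M : Type*) [AddCommGroup M] [Module A M] (I : Ideal A) : Submodule A M :=
  ⨆ n : ℕ, Submodule.torsionBySet A M ((I ^ n : Ideal A) : Set A)

/-- A polynomial function on an `A`-module `V` with values in the residue field of `A`:
an element of the subalgebra of functions generated by the linear ones. -/
def IsPolyFun [IsLocalRing A] (V : Type*) [AddCommGroup V] [Module A V]
    (f : V → ResidueField A) : Prop :=
  f ∈ Algebra.adjoin A {g : V → ResidueField A | ∃ l : V →ₗ[A] ResidueField A, g = ⇑l}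

/-- A Zariski open subset of an `A`-module `V` (for `V` a finite-dimensional vector space
over the residue field, this is the usual Zariski topology): the complement of the common
zero locus of a set of polynomial functions. -/
def IsZariskiOpen [IsLocalRing A] (V : Type*) [AddCommGroup V] [Module A V]
    (U : Set V) : Prop :=
  ∃ S : Set (V → ResidueField A), (∀ f ∈ S, IsPolyFun A V f) ∧
    U = {v | ∃ f ∈ S, f v ≠ 0}

end MixedMultDefs

/-! The multi-Rees module `⨁ n, I^n M` is noetherian over the multi-Rees algebra `⨁ n, I^n`. If
`x ∈ I i`, placed in degree `e i`, avoids every associated prime of the modules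
`⨁ n, I^n M / I^(n + e j) M` that does not contain the copy of `I i` in degree `e i`, then for
large `n i` multiplication by `x` detects membership: `x z ∈ I^(n + e i + e) M` forces
`z ∈ I^(n + e) M` as soon as `z ∈ I^n M`. The Artin–Rees lemma puts an element of
`x M ∩ I^(n + e i) M` in the form `x z` with `z` only boundedly less deep than `I^n M`, so `x` is
Rees superficial.

These are finitely many conditions, and the infinite residue field leaves room to avoid finitely
many primes of `A` not containing `I i` as well. If `I i` attains the maximal height `h` in
`A / Ann M` and the ideal generated by the previous elements has height at least `k < h` there,
then avoiding its minimal primes of height `k` makes the height grow. The resulting `x_1, …, x_h`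
generate an ideal of height `h`; prime avoidance in the maximal ideal extends them to `d = dim M`
elements generating an ideal of height `d` in `A / Ann M`, that is, to a system of parameters. -/

open DirectSum

section MultiPow

variable {A ι : Type*} [CommRing A] [Fintype ι] (I : ι → Ideal A)

/-- The product `I^n = ∏ i, I i ^ n i` of powers of a finite family of ideals, indexed by
multi-exponents. -/
def multiPow (n : ι → ℕ) : Ideal A := ∏ i, I i ^ n i

@[simp]
lemma multiPow_zero : multiPow I 0 = ⊤ := by simp [multiPow]

lemma multiPow_add (m n : ι → ℕ) : multiPow I (m + n) = multiPow I m * multiPow I n := by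
  simp [multiPow, pow_add, Finset.prod_mul_distrib]

lemma multiPow_single [DecidableEq ι] (i : ι) (k : ℕ) :
    multiPow I (Pi.single i k) = I i ^ k := by
  rw [multiPow, Finset.prod_eq_single_of_mem i (Finset.mem_univ i) fun j _ hj => by
    rw [Pi.single_eq_of_ne hj, pow_zero], Pi.single_eq_same]

lemma multiPow_single_one [DecidableEq ι] (i : ι) : multiPow I (Pi.single i 1) = I i := by
  rw [multiPow_single, pow_one]

lemma multiPow_antitone : Antitone (multiPow I) := fun m n hmn => by
  obtain ⟨k, rfl⟩ := exists_add_of_le hmn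
  rw [multiPow_add]
  exact Ideal.mul_le_left

variable (M : Type*) [AddCommGroup M] [Module A M]

/-- The multi-indexed adic filtration `n ↦ I^n M` of a module. -/
def adicFiltration (n : ι → ℕ) : Submodule A M := multiPow I n • ⊤

@[simp]
lemma adicFiltration_zero : adicFiltration I M 0 = ⊤ := by simp [adicFiltration]

lemma multiPow_smul_adicFiltration (m n : ι → ℕ) :
    multiPow I m • adicFiltration I M n = adicFiltration I M (m + n) := by
  rw [adicFiltration, adicFiltration, multiPow_add, mul_smul]

lemma adicFiltration_antitone : Antitone (adicFiltration I M) := fun _ _ hmn =>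
  Submodule.smul_mono_left (multiPow_antitone I hmn)

end MultiPow

section IsMultiStable

variable {A ι M : Type*} [CommRing A] [AddCommGroup M] [Module A M] [DecidableEq ι]
  {I : ι → Ideal A} {V W : (ι → ℕ) → Submodule A M}

variable (I V) in
/-- A multi-indexed family of submodules is stable when multiplication by `I i` raises the
`i`-th index by one, so that its direct sum is a module over the multi-Rees algebra. -/
def IsMultiStable : Prop := ∀ i n, I i • V n ≤ V (n + Pi.single i 1)

lemma isMultiStable_const (N : Submodule A M) : IsMultiStable I fun _ => N := fun _ _ =>
  Submodule.smul_le_right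

lemma IsMultiStable.inf (hV : IsMultiStable I V) (hW : IsMultiStable I W) :
    IsMultiStable I fun n => V n ⊓ W n := fun i n =>
  le_inf ((Submodule.smul_mono le_rfl inf_le_left).trans (hV i n))
    ((Submodule.smul_mono le_rfl inf_le_right).trans (hW i n))

lemma IsMultiStable.comap (hV : IsMultiStable I V) (f : M →ₗ[A] M) :
    IsMultiStable I fun n => (V n).comap f := fun i n => by
  refine Submodule.smul_le.2 fun a ha z hz => hV i n ?_
  rw [map_smul]
  exact Submodule.smul_mem_smul ha hz

lemma IsMultiStable.shift (hV : IsMultiStable I V) (e : ι → ℕ) :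
    IsMultiStable I fun n => V (n + e) := fun i n =>
  (hV i (n + e)).trans_eq (congrArg V (add_right_comm n e _))

lemma exists_eq_add_single {n : ι → ℕ} {i : ι} {k : ℕ} (hk : k ≤ n i) :
    ∃ m : ι → ℕ, n = m + Pi.single i k := by
  refine ⟨n - Pi.single i k, funext fun j => ?_⟩
  obtain rfl | hj := eq_or_ne j i
  · simp [hk]
  · simp [hj]

lemma multiIndex_induction [Finite ι] {p : (ι → ℕ) → Prop} (zero : p 0)
    (add_single : ∀ n i, p n → p (n + Pi.single i 1)) (n : ι → ℕ) : p n := by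
  cases nonempty_fintype ι
  suffices ∀ m, p m → p (m + n) by simpa using this 0 zero
  induction n using Pi.single_induction with
  | zero => simp
  | add n₁ n₂ h₁ h₂ => exact fun m hm => by simpa only [add_assoc] using h₂ _ (h₁ m hm)
  | single i k =>
    intro m hm
    induction k with
    | zero => simpa using hm
    | succ k ih => simpa only [Pi.single_add, ← add_assoc] using add_single _ i ih

variable [Fintype ι]

lemma IsMultiStable.multiPow_smul_le (hV : IsMultiStable I V) (m n : ι → ℕ) :
    multiPow I m • V n ≤ V (m + n) := by
  induction m using multiIndex_induction generalizing n with
  | zero => simp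
  | add_single m i ih =>
    calc multiPow I (m + Pi.single i 1) • V n
        = multiPow I m • I i • V n := by rw [multiPow_add, multiPow_single_one, mul_smul]
      _ ≤ multiPow I m • V (n + Pi.single i 1) := Submodule.smul_mono le_rfl (hV i n)
      _ ≤ V (m + (n + Pi.single i 1)) := ih _
      _ = V (m + Pi.single i 1 + n) := by rw [add_right_comm, add_assoc]

lemma smul_adicFiltration_single (i : ι) (n : ι → ℕ) :
    I i • adicFiltration I M n = adicFiltration I M (n + Pi.single i 1) := by
  rw [add_comm, ← multiPow_smul_adicFiltration, multiPow_single_one]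

lemma isMultiStable_adicFiltration : IsMultiStable I (adicFiltration I M) := fun i n =>
  (smul_adicFiltration_single i n).le

end IsMultiStable

section DirectSumOfSubmodules

variable {A M κ : Type*} [CommRing A] [AddCommGroup M] [Module A M] [DecidableEq κ]
  {V : κ → Submodule A M}

lemma directSum_of_congr {m n : κ} (hmn : m = n) {x : V m} {y : V n} (hxy : (x : M) = y) :
    of (fun n => V n) m x = of (fun n => V n) n y := by
  subst hmn
  rw [Subtype.ext hxy]

lemma coe_of_apply_mem {W : κ → Submodule A M} {n : κ} {z : V n} (hz : (z : M) ∈ W n) (k : κ) :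
    (of (fun n => V n) n z k : M) ∈ W k := by
  rw [DirectSum.coe_of_apply]
  split_ifs with hnk
  · exact hnk ▸ hz
  · exact (W k).zero_mem

/-- The elements of `V n` which, placed in degree `n`, belong to a given submodule of
`⨁ n, V n`. -/
def degreePart (L : Submodule A (⨁ n, V n)) (n : κ) : Submodule A M :=
  (L.comap (lof A κ (fun n => V n) n)).map (V n).subtype

lemma mem_degreePart {L : Submodule A (⨁ n, V n)} {n : κ} {z : M} :
    z ∈ degreePart L n ↔ ∃ hz : z ∈ V n, of (fun n => V n) n ⟨z, hz⟩ ∈ L := by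
  simp [degreePart, lof_eq_of]

lemma eq_top_of_le_degreePart {L : Submodule A (⨁ n, V n)} (hL : ∀ n, V n ≤ degreePart L n) :
    L = ⊤ := by
  refine eq_top_iff.2 fun f _ => ?_
  induction f using DirectSum.induction_on with
  | zero => exact L.zero_mem
  | of n z => exact (mem_degreePart.1 (hL n z.2)).2
  | add f g hf hg => exact L.add_mem (hf trivial) (hg trivial)

end DirectSumOfSubmodules

section MultiRees

variable {A ι : Type*} [CommRing A] [Fintype ι] (I : ι → Ideal A)
  (M : Type*) [AddCommGroup M] [Module A M]

instance : SetLike.GradedMonoid (multiPow I) where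
  one_mem := by simp
  mul_mem m n a b ha hb := by rw [multiPow_add]; exact Ideal.mul_mem_mul ha hb

instance : SetLike.GradedSMul (multiPow I) (adicFiltration I M) where
  smul_mem {m n a z} ha hz := by
    rw [vadd_eq_add, ← multiPow_smul_adicFiltration]
    exact Submodule.smul_mem_smul ha hz

/-- The multi-Rees algebra `⨁ n, I^n` of a family of ideals. -/
abbrev MultiRees := ⨁ n, multiPow I n

/-- The multi-Rees module `⨁ n, I^n M`. -/
abbrev MultiReesModule := ⨁ n, adicFiltration I M n

variable {I M}

lemma MultiRees.of_mul_of (m n : ι → ℕ) (a : multiPow I m) (b : multiPow I n) :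
    (of (fun n => multiPow I n) m a * of (fun n => multiPow I n) n b : MultiRees I) =
      of (fun n => multiPow I n) (m + n)
        ⟨a * b, SetLike.GradedMul.mul_mem a.2 b.2⟩ :=
  DirectSum.of_mul_of _ _

lemma MultiRees.of_smul_of (m n : ι → ℕ) (a : multiPow I m) (z : adicFiltration I M n) :
    (of (fun n => multiPow I n) m a • of (fun n => adicFiltration I M n) n z :
        MultiReesModule I M) =
      of (fun n => adicFiltration I M n) (m + n)
        ⟨(a : A) • (z : M), SetLike.GradedSMul.smul_mem a.2 z.2⟩ :=
  DirectSum.Gmodule.of_smul_of _ _ _ _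

instance : IsScalarTower A (MultiRees I) (MultiReesModule I M) :=
  .of_algebraMap_smul fun a f => by
    induction f using DirectSum.induction_on with
    | zero => simp only [smul_zero]
    | add f g hf hg => simp only [smul_add, hf, hg]
    | of n z =>
      have ha : algebraMap A (MultiRees I) a =
          of (fun n => multiPow I n) 0 ⟨a, by simp⟩ := by
        rw [DirectSum.algebraMap_apply]
        exact directSum_of_congr rfl (by simp)
      rw [ha, MultiRees.of_smul_of, ← lof_eq_of A, ← lof_eq_of A, ← map_smul, lof_eq_of A]
      exact directSum_of_congr (zero_add n) rfl

end MultiRees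

section Finiteness

variable {A ι M : Type*} [CommRing A] [AddCommGroup M] [Module A M] [Fintype ι]
  {I : ι → Ideal A}

lemma multiPow_le_degreePart_of_single [DecidableEq ι] {S : Subalgebra A (MultiRees I)}
    (hS : ∀ i (a : multiPow I (Pi.single i 1)), of (fun n => multiPow I n) (Pi.single i 1) a ∈ S)
    (n : ι → ℕ) : multiPow I n ≤ degreePart S.toSubmodule n := by
  have stable : IsMultiStable I (degreePart S.toSubmodule) := fun i n =>
    Submodule.smul_le.2 fun a ha b hb => by
      obtain ⟨hb, hbS⟩ := mem_degreePart.1 hb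
      have ha' : a ∈ multiPow I (Pi.single i 1) := by rwa [multiPow_single_one]
      have hab := S.mul_mem hbS (hS i ⟨a, ha'⟩)
      rw [MultiRees.of_mul_of] at hab
      rw [smul_eq_mul, mul_comm]
      exact mem_degreePart.2 ⟨_, hab⟩
  have one_mem : (1 : A) ∈ degreePart S.toSubmodule 0 := mem_degreePart.2 ⟨by simp, S.one_mem⟩
  intro a ha
  simpa using stable.multiPow_smul_le n 0 (Submodule.smul_mem_smul ha one_mem)

instance [IsNoetherianRing A] : Algebra.FiniteType A (MultiRees I) := by
  classical
  choose S hS using fun i =>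
    Module.Finite.fg_top (R := A) (M := multiPow I (Pi.single i 1))
  let gens : Finset (MultiRees I) := Finset.univ.biUnion fun i =>
    (S i).image (lof A _ (fun n => multiPow I n) (Pi.single i 1))
  have map_span_le (i : ι) : Submodule.span A (S i : Set (multiPow I (Pi.single i 1))) ≤
      (Algebra.adjoin A gens).toSubmodule.comap
        (lof A _ (fun n => multiPow I n) (Pi.single i 1)) :=
    Submodule.span_le.2 fun b hb => Algebra.subset_adjoin <| Finset.mem_coe.2 <|
      Finset.mem_biUnion.2 ⟨i, Finset.mem_univ i, Finset.mem_image_of_mem _ hb⟩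
  refine ⟨gens, Algebra.toSubmodule_eq_top.1 <| eq_top_of_le_degreePart <|
    multiPow_le_degreePart_of_single fun i a => ?_⟩
  exact map_span_le i (hS i ▸ Submodule.mem_top)

instance [IsNoetherianRing A] : IsNoetherianRing (MultiRees I) :=
  Algebra.FiniteType.isNoetherianRing A _

lemma isMultiStable_degreePart [DecidableEq ι] (L : Submodule (MultiRees I) (MultiReesModule I M)) :
    IsMultiStable I (degreePart (L.restrictScalars A)) := fun i n =>
  Submodule.smul_le.2 fun a ha z hz => by
    obtain ⟨hz, hzL⟩ := mem_degreePart.1 hz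
    have ha' : a ∈ multiPow I (Pi.single i 1) := by rwa [multiPow_single_one]
    have haz := L.smul_mem (of (fun n => multiPow I n) (Pi.single i 1) ⟨a, ha'⟩) hzL
    rw [MultiRees.of_smul_of] at haz
    rw [add_comm]
    exact mem_degreePart.2 ⟨_, haz⟩

instance [Module.Finite A M] : Module.Finite (MultiRees I) (MultiReesModule I M) := by
  classical
  obtain ⟨S, hS⟩ := Module.Finite.fg_top (R := A) (M := M)
  let gens : Finset (MultiReesModule I M) :=
    S.image fun z => of (fun n => adicFiltration I M n) 0 ⟨z, by simp⟩
  let L : Submodule (MultiRees I) (MultiReesModule I M) := Submodule.span _ gens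
  have zero_eq_top : degreePart (L.restrictScalars A) 0 = ⊤ := top_unique <|
    hS.ge.trans <| Submodule.span_le.2 fun z hz => mem_degreePart.2
      ⟨by simp, Submodule.subset_span (Finset.mem_coe.2 (Finset.mem_image_of_mem _ hz))⟩
  have restrict_eq_top : L.restrictScalars A = ⊤ := eq_top_of_le_degreePart fun n => by
    have smul_top_le := (isMultiStable_degreePart L).multiPow_smul_le n 0
    rwa [add_zero, zero_eq_top] at smul_top_le
  exact ⟨gens, by simpa using restrict_eq_top⟩

variable [DecidableEq ι]

/-- The submodule `⨁ n, V n ⊓ I^n M` of the multi-Rees module attached to a stable family. -/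
def reesSubmodule {V : (ι → ℕ) → Submodule A M} (hV : IsMultiStable I V) :
    Submodule (MultiRees I) (MultiReesModule I M) where
  carrier := {f | ∀ n, (f n : M) ∈ V n}
  zero_mem' n := (V n).zero_mem
  add_mem' hf hg n := (V n).add_mem (hf n) (hg n)
  smul_mem' r f hf := by
    classical
    induction r using DirectSum.induction_on with
    | zero => intro n; simp
    | add r t hr ht =>
      intro n
      rw [add_smul, DirectSum.add_apply]
      exact (V n).add_mem (hr n) (ht n)
    | of m a =>
      intro k
      rw [← sum_support_of f, Finset.smul_sum, DFinsupp.finsetSum_apply,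
        AddSubmonoidClass.coe_finsetSum]
      refine Submodule.sum_mem _ fun n _ => ?_
      rw [MultiRees.of_smul_of]
      exact coe_of_apply_mem (hV.multiPow_smul_le m n (Submodule.smul_mem_smul a.2 (hf n))) k

variable {V W : (ι → ℕ) → Submodule A M}

lemma mem_reesSubmodule {hV : IsMultiStable I V} {f : MultiReesModule I M} :
    f ∈ reesSubmodule hV ↔ ∀ n, (f n : M) ∈ V n := Iff.rfl

lemma of_mem_reesSubmodule {hV : IsMultiStable I V} {n : ι → ℕ} {z : adicFiltration I M n} :
    of (fun n => adicFiltration I M n) n z ∈ reesSubmodule hV ↔ (z : M) ∈ V n :=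
  ⟨fun h => by simpa using h n, coe_of_apply_mem⟩

/-- The finitely many generators of `⨁ n, V n` live in bounded degrees. -/
lemma IsMultiStable.exists_forall_le_of_bounded [IsNoetherianRing A] [Module.Finite A M]
    (hV : IsMultiStable I V) (hVI : V ≤ adicFiltration I M) :
    ∃ D : ℕ, ∀ W : (ι → ℕ) → Submodule A M, IsMultiStable I W →
      (∀ n, (∀ i, n i ≤ D) → V n ≤ W n) → V ≤ W := by
  classical
  have : IsNoetherian (MultiRees I) (MultiReesModule I M) := inferInstance
  obtain ⟨S, hS⟩ := this.noetherian (reesSubmodule hV)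
  let D := S.sup fun f => f.support.sup fun n => Finset.univ.sup n
  refine ⟨D, fun W hW hVW n z hz => ?_⟩
  have reesSubmodule_le : reesSubmodule hV ≤ reesSubmodule hW := by
    rw [← hS]
    refine Submodule.span_le.2 fun f hf k => ?_
    by_cases hk : k ∈ f.support
    · refine hVW k (fun i => ?_) (mem_reesSubmodule.1 (hS ▸ Submodule.subset_span hf) k)
      calc k i ≤ Finset.univ.sup k := Finset.le_sup (Finset.mem_univ i)
        _ ≤ f.support.sup fun n => Finset.univ.sup n := Finset.le_sup hk
        _ ≤ D := Finset.le_sup (f := fun f : MultiReesModule I M =>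
          f.support.sup fun n => Finset.univ.sup n) hf
    · rw [DFinsupp.notMem_support_iff.1 hk]
      exact (W k).zero_mem
  exact of_mem_reesSubmodule.1 <| reesSubmodule_le <|
    of_mem_reesSubmodule (z := ⟨z, hVI n hz⟩).2 hz

end Finiteness

section ArtinRees

variable {A ι M : Type*} [CommRing A] [IsNoetherianRing A] [AddCommGroup M] [Module A M]
  [Module.Finite A M] [Fintype ι] {I : ι → Ideal A} {V : (ι → ℕ) → Submodule A M}

lemma exists_inf_adicFiltration_le (I : ι → Ideal A) (N : Submodule A M) :
    ∃ D : ℕ, ∀ n, N ⊓ adicFiltration I M n ≤ multiPow I (n - fun _ => D) • N := by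
  classical
  obtain ⟨D, hD⟩ := ((isMultiStable_const N).inf isMultiStable_adicFiltration
    ).exists_forall_le_of_bounded (I := I) fun _ => inf_le_right
  refine ⟨D, hD _ (fun i n => ?_) fun n hn => ?_⟩
  · rw [← mul_smul, ← multiPow_single_one I i, ← multiPow_add]
    refine Submodule.smul_mono_left (multiPow_antitone I fun j => ?_)
    simp only [Pi.add_apply, Pi.sub_apply]
    lia
  · rw [tsub_eq_zero_of_le fun i => hn i]
    simp

variable [DecidableEq ι]

lemma IsMultiStable.exists_le_smul (hV : IsMultiStable I V) (hVI : V ≤ adicFiltration I M)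
    (i : ι) : ∃ D : ℕ, ∀ n, D ≤ n i → V (n + Pi.single i 1) ≤ I i • V n := by
  obtain ⟨D, hD⟩ := hV.exists_forall_le_of_bounded hVI
  let W (n : ι → ℕ) : Submodule A M := if n i ≤ D then V n else I i • V (n - Pi.single i 1)
  have W_of_le {n : ι → ℕ} (hn : n i ≤ D) : W n = V n := if_pos hn
  have W_add_single {n : ι → ℕ} (hn : D ≤ n i) : W (n + Pi.single i 1) = I i • V n := by
    simp [W, hn]
  have hW : IsMultiStable I W := fun j n => by
    rcases le_or_gt (n i) D with hn | hn
    · rcases le_or_gt ((n + Pi.single j 1 : ι → ℕ) i) D with hnj | hnj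
      · rw [W_of_le hn, W_of_le hnj]
        exact hV j n
      · obtain rfl : i = j := by
          by_contra hij
          exact hnj.not_ge (by simpa [Pi.single_eq_of_ne hij] using hn)
        rw [W_of_le hn, W_add_single (by simpa using hnj)]
    · obtain ⟨m, rfl⟩ := exists_eq_add_single (Nat.one_le_of_lt hn)
      have hm : D ≤ m i := by simpa using hn
      rw [W_add_single hm, add_right_comm, W_add_single (hm.trans (Nat.le_add_right _ _)),
        smul_comm]
      exact Submodule.smul_mono le_rfl (hV j m)
  exact ⟨D, fun n hn => (hD W hW (fun m hm => (W_of_le (hm i)).ge) _).trans_eq (W_add_single hn)⟩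

lemma IsMultiStable.exists_le_pow_smul (hV : IsMultiStable I V) (hVI : V ≤ adicFiltration I M)
    (i : ι) : ∃ D : ℕ, ∀ p n, D ≤ n i → V (n + Pi.single i p) ≤ I i ^ p • V n := by
  obtain ⟨D, hD⟩ := hV.exists_le_smul hVI i
  refine ⟨D, fun p n hn => ?_⟩
  induction p with
  | zero => simp
  | succ p ih =>
    rw [Pi.single_add, ← add_assoc, pow_succ', mul_smul]
    exact (hD _ (hn.trans (Nat.le_add_right _ _))).trans (Submodule.smul_mono le_rfl ih)

end ArtinRees

section Avoidance

lemma exists_forall_notMem_of_infinite_residueField {A V : Type*} [CommRing A] [IsLocalRing A]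
    [Infinite (ResidueField A)] [AddCommGroup V] [Module A V] [Module.Finite A V]
    {T : Set (Submodule A V)} (hT : T.Finite) (hne : ∀ W ∈ T, W ≠ ⊤) :
    ∃ v, ∀ W ∈ T, v ∉ W := by
  by_contra! hcover
  obtain ⟨W, hW, hWfin⟩ := Submodule.exists_finiteIndex_of_cover (s := hT.toFinset) (p := id) <| by
    simpa [Set.eq_univ_iff_forall] using hcover
  obtain hW_top | ⟨W', hW', hWW'⟩ := eq_top_or_exists_le_coatom W
  · exact hne W (hT.mem_toFinset.1 hW) hW_top
  have : IsSimpleModule A (V ⧸ W') := isSimpleModule_iff_isCoatom.2 hW'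
  obtain ⟨m, hm, ⟨e⟩⟩ := isSimpleModule_iff_quot_maximal.1 this
  obtain rfl := IsLocalRing.eq_maximalIdeal hm
  have : W.toAddSubgroup.FiniteIndex := hWfin
  have : Finite (V ⧸ W) := AddSubgroup.finite_quotient_of_finiteIndex (H := W.toAddSubgroup)
  have : Finite (V ⧸ W') := .of_surjective _ (Submodule.factor_surjective hWW')
  have : Finite (ResidueField A) := .of_equiv _ e.toEquiv
  exact not_finite (ResidueField A)

lemma exists_pow_le_annihilator_torsionBy {R G : Type*} [CommRing R] [IsNoetherianRing R]
    [AddCommGroup G] [Module R G] [Module.Finite R G] {y : R} {J : Ideal R}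
    (hJ : ∀ P ∈ associatedPrimes R G, y ∈ P → J ≤ P) :
    ∃ p : ℕ, J ^ p ≤ Module.annihilator R (Submodule.torsionBy R G y) := by
  refine Ideal.exists_pow_le_of_le_radical_of_fg ?_ (IsNoetherian.noetherian J)
  rw [← Ideal.sInf_minimalPrimes, le_sInf_iff]
  intro P hP
  have hPG : P ∈ associatedPrimes R G :=
    (Module.associatedPrimes.minimalPrimes_annihilator_subset_associatedPrimes R _
      hP).map_of_injective (Submodule.subtype _) Subtype.val_injective
  exact hJ P hPG <| hP.1.2 <| Module.mem_annihilator.2 fun g =>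
    (Submodule.smul_torsionBy y g)

end Avoidance

section ColonFamily

variable {A ι : Type*} [CommRing A] [Fintype ι] [DecidableEq ι]
  (I : ι → Ideal A) (M : Type*) [AddCommGroup M] [Module A M]

/-- The elements `z` of `I^n M` which multiplication by `x`, regarded as an element of `I i`,
sends deeper than expected: `x z` lies in `I^(n + e) I_i M` and not just in `I^n I_i M`. -/
def colonFamily (i : ι) (x : A) (e n : ι → ℕ) : Submodule A M :=
  adicFiltration I M n ⊓
    (adicFiltration I M (n + (Pi.single i 1 + e))).comap (LinearMap.lsmul A M x)

/-- The module `⨁ n, I^n M / I^(n + e) M` over the multi-Rees algebra. -/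
abbrev AssocGradedModule (e : ι → ℕ) : Type _ :=
  MultiReesModule I M ⧸ reesSubmodule ((isMultiStable_adicFiltration (I := I) (M := M)).shift e)

/-- The ideal of the multi-Rees algebra generated by the copy of `I i` in degree
`Pi.single i 1`. -/
def unitDegreeIdeal (i : ι) : Ideal (MultiRees I) :=
  Ideal.span (Set.range (of (fun n => multiPow I n) (Pi.single i 1)))

variable {I M}

lemma mem_colonFamily {i : ι} {x : A} {e n : ι → ℕ} {z : M} :
    z ∈ colonFamily I M i x e n ↔
      z ∈ adicFiltration I M n ∧ x • z ∈ adicFiltration I M (n + (Pi.single i 1 + e)) := Iff.rfl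

lemma isMultiStable_colonFamily (i : ι) (x : A) (e : ι → ℕ) :
    IsMultiStable I (colonFamily I M i x e) :=
  isMultiStable_adicFiltration.inf ((isMultiStable_adicFiltration.shift _).comap _)

lemma mk_of_eq_zero {e n : ι → ℕ} {z : adicFiltration I M n} :
    (Submodule.Quotient.mk (of (fun n => adicFiltration I M n) n z) : AssocGradedModule I M e) = 0 ↔
      (z : M) ∈ adicFiltration I M (n + e) :=
  (Submodule.Quotient.mk_eq_zero _).trans of_mem_reesSubmodule

lemma pow_le_degreePart_unitDegreeIdeal_pow (i : ι) (p : ℕ) :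
    I i ^ p ≤ degreePart ((unitDegreeIdeal I i ^ p).restrictScalars A) (Pi.single i p) := by
  induction p with
  | zero => exact fun b _ => mem_degreePart.2 ⟨by simp, by simp⟩
  | succ p ih =>
    rw [pow_succ']
    refine Ideal.mul_le.2 fun a ha b hb => ?_
    obtain ⟨hb, hbJ⟩ := mem_degreePart.1 (ih hb)
    have ha' : a ∈ multiPow I (Pi.single i 1) := by rwa [multiPow_single_one]
    have hab : of (fun n => multiPow I n) (Pi.single i 1) ⟨a, ha'⟩ * of _ (Pi.single i p) ⟨b, hb⟩ ∈
        unitDegreeIdeal I i ^ (p + 1) := by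
      rw [pow_succ']
      exact Ideal.mul_mem_mul (Ideal.subset_span ⟨_, rfl⟩) hbJ
    rw [MultiRees.of_mul_of] at hab
    rw [show (Pi.single i (p + 1) : ι → ℕ) = Pi.single i 1 + Pi.single i p by
      rw [← Pi.single_add, add_comm]]
    exact mem_degreePart.2 ⟨_, hab⟩

variable [IsNoetherianRing A] [Module.Finite A M]

lemma exists_pow_smul_colonFamily_le {i : ι} {x : multiPow I (Pi.single i 1)} {e : ι → ℕ}
    (hx : ∀ P ∈ associatedPrimes (MultiRees I) (AssocGradedModule I M e),
      of (fun n => multiPow I n) _ x ∈ P → unitDegreeIdeal I i ≤ P) :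
    ∃ p : ℕ, ∀ n,
      I i ^ p • colonFamily I M i x e n ≤ adicFiltration I M (n + Pi.single i p + e) := by
  obtain ⟨p, hp⟩ := exists_pow_le_annihilator_torsionBy hx
  refine ⟨p, fun n => Submodule.smul_le.2 fun b hb z hz => ?_⟩
  obtain ⟨hz, hxz⟩ := mem_colonFamily.1 hz
  let g : AssocGradedModule I M e :=
    Submodule.Quotient.mk (of (fun n => adicFiltration I M n) n ⟨z, hz⟩)
  have hg : of (fun n => multiPow I n) _ x • g = 0 := by
    rw [← Submodule.Quotient.mk_smul, MultiRees.of_smul_of, mk_of_eq_zero]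
    rwa [add_left_comm, ← add_assoc] at hxz
  obtain ⟨hb, hbJ⟩ := mem_degreePart.1 (pow_le_degreePart_unitDegreeIdeal_pow i p hb)
  have hbg : of (fun n => multiPow I n) _ ⟨b, hb⟩ • g = 0 :=
    congrArg Subtype.val (Module.mem_annihilator.1 (hp hbJ) ⟨g, hg⟩)
  rw [add_comm n]
  exact mk_of_eq_zero.1 <| by
    rwa [← Submodule.Quotient.mk_smul, MultiRees.of_smul_of] at hbg

lemma exists_colonFamily_le {i : ι} {x : multiPow I (Pi.single i 1)} {e : ι → ℕ}
    (hx : ∀ P ∈ associatedPrimes (MultiRees I) (AssocGradedModule I M e),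
      of (fun n => multiPow I n) _ x ∈ P → unitDegreeIdeal I i ≤ P) :
    ∃ c : ℕ, ∀ n, c ≤ n i → colonFamily I M i x e n ≤ adicFiltration I M (n + e) := by
  obtain ⟨p, hp⟩ := exists_pow_smul_colonFamily_le hx
  obtain ⟨D, hD⟩ := (isMultiStable_colonFamily (I := I) (M := M) i x e).exists_le_pow_smul
    (fun _ => inf_le_left) i
  refine ⟨D + p, fun n hn => ?_⟩
  obtain ⟨m, rfl⟩ := exists_eq_add_single (Nat.le_of_add_left_le hn)
  exact (hD p m (by simpa using hn)).trans (hp m)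

/-- Prime avoidance over the infinite residue field, in `I i` and simultaneously in its copy
inside the multi-Rees algebra. -/
lemma exists_mem_forall_colonFamily_le [IsLocalRing A] [Infinite (ResidueField A)] (i : ι)
    {T : Set (Ideal A)} (hT : T.Finite) (hTi : ∀ P ∈ T, ¬ I i ≤ P) :
    ∃ x ∈ I i, (∀ P ∈ T, x ∉ P) ∧ ∃ c : ℕ, ∀ j n, c ≤ n i →
      colonFamily I M i x (Pi.single j 1) n ≤ adicFiltration I M (n + Pi.single j 1) := by
  let ass : Set (Ideal (MultiRees I)) :=
    ⋃ j : ι, associatedPrimes (MultiRees I) (AssocGradedModule I M (Pi.single j 1))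
  have hass : ass.Finite := Set.finite_iUnion fun j => associatedPrimes.finite _ _
  let E := multiPow I (Pi.single i 1)
  have hE : E = I i := multiPow_single_one I i
  let ofE : E →ₗ[A] MultiRees I := lof A _ (fun n => multiPow I n) (Pi.single i 1)
  let T' : Set (Submodule A E) := (fun P : Ideal A => Submodule.comap E.subtype P) '' T ∪
    (fun P : Ideal (MultiRees I) => (P.restrictScalars A).comap ofE) ''
      (ass \ {P | unitDegreeIdeal I i ≤ P})
  have hT' : T'.Finite := (hT.image _).union (hass.sdiff.image _)
  obtain ⟨x, hx⟩ := exists_forall_notMem_of_infinite_residueField hT' <| by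
    rintro _ (⟨P, hP, rfl⟩ | ⟨P, hP, rfl⟩) htop
    · refine hTi P hP fun a ha => ?_
      exact htop.ge (Submodule.mem_top (x := ⟨a, hE.ge ha⟩))
    · refine hP.2 (Ideal.span_le.2 ?_)
      rintro _ ⟨a, rfl⟩
      exact htop.ge (Submodule.mem_top (x := a))
  have colon (j : ι) := exists_colonFamily_le (x := x) (e := Pi.single j 1) (M := M)
    fun P hP hxP => by
      by_contra hJP
      exact hx _ (.inr ⟨P, ⟨Set.mem_iUnion.2 ⟨j, hP⟩, hJP⟩, rfl⟩) hxP
  choose c hc using colon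
  exact ⟨x, hE.le x.2, fun P hP hxP => hx _ (.inl ⟨P, hP, rfl⟩) hxP, Finset.univ.sup c,
    fun j n hn => hc j n ((Finset.le_sup (Finset.mem_univ j)).trans hn)⟩

end ColonFamily

section Superficial

variable {A ι M : Type*} [CommRing A] [AddCommGroup M] [Module A M] [Fintype ι] [DecidableEq ι]
  {I : ι → Ideal A} {i : ι} {x : A}

lemma colonFamily_le_of_single {c : ℕ}
    (hc : ∀ j n, c ≤ n i →
      colonFamily I M i x (Pi.single j 1) n ≤ adicFiltration I M (n + Pi.single j 1))
    (e n : ι → ℕ) (hn : c ≤ n i) : colonFamily I M i x e n ≤ adicFiltration I M (n + e) := by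
  induction e using multiIndex_induction with
  | zero => exact inf_le_left.trans_eq (by rw [add_zero])
  | add_single e j ih =>
    rintro z ⟨hz, hxz⟩
    have hze : z ∈ adicFiltration I M (n + e) :=
      ih ⟨hz, adicFiltration_antitone I M (by gcongr; exact le_self_add) hxz⟩
    rw [← add_assoc]
    refine hc j (n + e) (hn.trans le_self_add) (mem_colonFamily.2 ⟨hze, ?_⟩)
    rwa [add_add_add_comm, add_assoc]

lemma span_singleton_inf_adicFiltration_eq (hxi : x ∈ I i) {c D : ℕ}
    (hc : ∀ e n, c ≤ n i → colonFamily I M i x e n ≤ adicFiltration I M (n + e))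
    (hD : ∀ n, Ideal.span {x} • (⊤ : Submodule A M) ⊓ adicFiltration I M n ≤
      multiPow I (n - fun _ => D) • Ideal.span {x} • (⊤ : Submodule A M))
    {n : ι → ℕ} (hn : c + D ≤ n i) :
    Ideal.span {x} • (⊤ : Submodule A M) ⊓ adicFiltration I M (n + Pi.single i 1) =
      Ideal.span {x} • adicFiltration I M n := by
  refine le_antisymm (fun w hw => ?_) (le_inf (Submodule.smul_mono le_rfl le_top) ?_)
  · have hwD := hD _ hw
    rw [smul_comm, ← adicFiltration, Submodule.ideal_span_singleton_smul,
      Submodule.mem_smul_pointwise_iff_exists] at hwD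
    obtain ⟨z, hz, rfl⟩ := hwD
    rw [Submodule.ideal_span_singleton_smul]
    refine Submodule.smul_mem_pointwise_smul _ _ _ ?_
    let m := n - fun _ => D
    have hmn : m ≤ n := tsub_le_self
    have hzm : z ∈ adicFiltration I M m :=
      adicFiltration_antitone I M (fun j => by simp only [m, Pi.sub_apply, Pi.add_apply]; lia) hz
    rw [← add_tsub_cancel_of_le hmn]
    refine hc (n - m) m (by simp only [m, Pi.sub_apply]; lia) ⟨hzm, ?_⟩
    rw [add_left_comm, add_tsub_cancel_of_le hmn, add_comm]
    exact hw.2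
  · rw [← smul_adicFiltration_single]
    exact Submodule.smul_mono_left ((Ideal.span_singleton_le_iff_mem _).2 hxi)

lemma exists_isReesSuperficial [IsNoetherianRing A] [IsLocalRing A] [Infinite (ResidueField A)]
    [Module.Finite A M] {s : ℕ} (I : Fin s → Ideal A) (i : Fin s) {T : Set (Ideal A)}
    (hT : T.Finite) (hTi : ∀ P ∈ T, ¬ I i ≤ P) :
    ∃ x, IsReesSuperficial A M I i x ∧ ∀ P ∈ T, x ∉ P := by
  obtain ⟨x, hxi, hxT, c, hc⟩ := exists_mem_forall_colonFamily_le (M := M) i hT hTi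
  obtain ⟨D, hD⟩ := exists_inf_adicFiltration_le I (Ideal.span {x} • (⊤ : Submodule A M))
  refine ⟨x, ⟨hxi, c + D, fun n hn => ?_⟩, hxT⟩
  have prod_eq : ∏ j, I j ^ (n j + if j = i then 1 else 0) = multiPow I (n + Pi.single i 1) := by
    simp only [multiPow, Pi.add_apply, Pi.single_apply]
  rw [prod_eq]
  exact span_singleton_inf_adicFiltration_eq hxi (colonFamily_le_of_single hc) hD hn

end Superficial

section Height

lemma idealHeight_eq_height {R : Type*} [CommRing R] (J : Ideal R) :
    idealHeight R J = J.height := by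
  refine le_antisymm ?_ (le_iInf₂ fun p hp => ?_)
  · rw [J.height_eq_inf_minimalPrimes]
    refine le_iInf₂ fun P hP => ?_
    have : P.IsPrime := hP.isPrime
    exact (iInf₂_le (⟨P, this⟩ : PrimeSpectrum R) hP.le).trans_eq
      (PrimeSpectrum.height_eq_orderHeight _).symm
  · rw [← PrimeSpectrum.height_eq_orderHeight]
    exact Ideal.height_mono hp

variable {R S : Type*} [CommRing R] [CommRing S] {φ : R →+* S}
  {J : Ideal R} {k : ℕ} {x : R}

/-- The contractions to `R` of the minimal primes over `JS` of height `k`. When `JS` has height at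
least `k`, adjoining to `J` an element that avoids all of them makes the height grow. -/
def minimalPrimesOfHeight (φ : R →+* S) (J : Ideal R) (k : ℕ) : Set (Ideal R) :=
  Ideal.comap φ '' {P | P ∈ (J.map φ).minimalPrimes ∧ P.height = k}

lemma not_le_of_mem_minimalPrimesOfHeight {P K : Ideal R} (hP : P ∈ minimalPrimesOfHeight φ J k)
    (hK : k < (K.map φ).height) : ¬ K ≤ P := by
  obtain ⟨Q, ⟨-, hQk⟩, rfl⟩ := hP
  rw [← Ideal.map_le_iff_le_comap]
  exact fun hKQ => (hK.trans_le (Ideal.height_mono hKQ)).ne' hQk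

variable [IsNoetherianRing S]

lemma finite_minimalPrimesOfHeight : (minimalPrimesOfHeight φ J k).Finite :=
  ((Ideal.finite_minimalPrimes_of_isNoetherianRing S _).subset fun _ hP => hP.1).image _

lemma add_one_le_height_of_forall_notMem (hJ : k ≤ (J.map φ).height)
    (hx : ∀ P ∈ minimalPrimesOfHeight φ J k, x ∉ P) :
    (k + 1 : ℕ) ≤ ((J ⊔ Ideal.span {x}).map φ).height := by
  rw [Ideal.height_eq_inf_minimalPrimes]
  refine le_iInf₂ fun P hP => ?_
  have : P.IsPrime := hP.isPrime
  have hJP : J.map φ ≤ P := (Ideal.map_mono le_sup_left).trans hP.le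
  have hxP : x ∈ P.comap φ :=
    Ideal.map_le_iff_le_comap.1 hP.le (Ideal.mem_sup_right (Ideal.mem_span_singleton_self x))
  rw [Nat.cast_add_one]
  refine Order.add_one_le_of_lt (lt_of_le_of_ne (hJ.trans (Ideal.height_mono hJP)) fun hk => ?_)
  exact hx _ ⟨P, ⟨Ideal.mem_minimalPrimes_of_height_le hJP (hk.symm.trans_le hJ), hk.symm⟩, rfl⟩ hxP

lemma exists_mem_add_one_le_height {K : Ideal R} (hJ : k ≤ (J.map φ).height)
    (hK : k < (K.map φ).height) :
    ∃ x ∈ K, (k + 1 : ℕ) ≤ ((J ⊔ Ideal.span {x}).map φ).height := by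
  have hprime : ∀ P ∈ minimalPrimesOfHeight φ J k, P.IsPrime := by
    rintro _ ⟨Q, ⟨hQ, -⟩, rfl⟩
    exact hQ.isPrime.comap φ
  have hcover : ¬ (K : Set R) ⊆ ⋃ P ∈ minimalPrimesOfHeight φ J k, P := fun hcover => by
    obtain ⟨P, hP, hKP⟩ := (Ideal.subset_union_prime_finite finite_minimalPrimesOfHeight
      (f := id) ⊤ ⊤ fun P hP _ _ => hprime P hP).1 hcover
    exact not_le_of_mem_minimalPrimesOfHeight hP hK hKP
  obtain ⟨x, hxK, hx⟩ := Set.not_subset.1 hcover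
  exact ⟨x, hxK, add_one_le_height_of_forall_notMem hJ fun P hP hxP =>
    hx (Set.mem_biUnion hP hxP)⟩

lemma span_range_snoc {h : ℕ} (x : Fin h → R) (y : R) :
    Ideal.span (Set.range (Fin.snoc x y : Fin (h + 1) → R)) =
      Ideal.span (Set.range x) ⊔ Ideal.span {y} := by
  rw [Fin.range_snoc, Ideal.span_insert, sup_comm]

lemma exists_extension_le_height {K : Ideal R} {h d : ℕ} (hhd : h ≤ d)
    (hK : d ≤ (K.map φ).height) {x : Fin h → R} (hxK : ∀ j, x j ∈ K)
    (hx : h ≤ ((Ideal.span (Set.range x)).map φ).height) :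
    ∃ (y : Fin d → R) (f : Fin h ↪ Fin d), (∀ j, y j ∈ K) ∧
      d ≤ ((Ideal.span (Set.range y)).map φ).height ∧ ∀ j, y (f j) = x j := by
  induction d, hhd using Nat.le_induction with
  | base => exact ⟨x, .refl _, hxK, hx, fun _ => rfl⟩
  | succ d _ ih =>
    have hdK : d < (K.map φ).height := (Nat.cast_lt.2 d.lt_succ_self).trans_le hK
    obtain ⟨y, f, hyK, hy, hyf⟩ := ih hdK.le
    obtain ⟨z, hzK, hz⟩ := exists_mem_add_one_le_height hy hdK
    refine ⟨Fin.snoc y z, f.trans Fin.castSuccEmb, ?_, ?_, fun j => ?_⟩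
    · simpa only [Fin.forall_fin_succ', Fin.snoc_castSucc, Fin.snoc_last] using ⟨hyK, hzK⟩
    · rwa [span_range_snoc]
    · exact (Fin.snoc_castSucc ..).trans (hyf j)

end Height

section SuperficialSequence

variable {A M : Type*} [CommRing A] [AddCommGroup M] [Module A M] {s : ℕ} {I : Fin s → Ideal A}

lemma IsReesSuperficialSeq.snoc {h : ℕ} {x : Fin h → A} {c : Fin h → Fin s}
    (hx : IsReesSuperficialSeq A M I x c) {i : Fin s} {y : A}
    (hy : IsReesSuperficial A (M ⧸ (Ideal.span (Set.range x) • (⊤ : Submodule A M))) I i y) :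
    IsReesSuperficialSeq A M I (Fin.snoc x y : Fin (h + 1) → A) (Fin.snoc c i) := by
  have image_snoc {k : ℕ} (hk : k ≤ h) :
      (Fin.snoc x y : Fin (h + 1) → A) '' {j | (j : ℕ) < k} = x '' {j | (j : ℕ) < k} := by
    ext z
    simp only [Set.mem_image, Set.mem_ofPred_eq, Fin.exists_fin_succ', Fin.snoc_castSucc,
      Fin.val_castSucc, Fin.val_last, hk.not_gt, false_and, or_false]
  refine Fin.lastCases ?_ fun j => ?_
  · rw [Fin.val_last, image_snoc le_rfl, Fin.snoc_last, Fin.snoc_last]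
    rwa [Set.eq_univ_of_forall (s := {j : Fin h | (j : ℕ) < h}) Fin.is_lt, Set.image_univ]
  · rw [Fin.val_castSucc, image_snoc j.is_lt.le, Fin.snoc_castSucc, Fin.snoc_castSucc]
    exact hx j

lemma exists_isReesSuperficialSeq [IsNoetherianRing A] [IsLocalRing A]
    [Infinite (ResidueField A)] (M : Type*) [AddCommGroup M] [Module A M] [Module.Finite A M]
    {S : Type*} [CommRing S] [IsNoetherianRing S] (φ : A →+* S) {h : ℕ} (c : Fin h → Fin s)
    (hc : ∀ k : Fin h, (k : ℕ) < ((I (c k)).map φ).height) :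
    ∃ x, IsReesSuperficialSeq A M I x c ∧ h ≤ ((Ideal.span (Set.range x)).map φ).height := by
  induction h with
  | zero => exact ⟨Fin.elim0, fun k => k.elim0, zero_le⟩
  | succ h ih =>
    obtain ⟨x, hx, hxh⟩ := ih (fun k => c k.castSucc) fun k => hc k.castSucc
    obtain ⟨y, hy, hyT⟩ := exists_isReesSuperficial
      (M := M ⧸ (Ideal.span (Set.range x) • (⊤ : Submodule A M))) I (c (Fin.last h))
      finite_minimalPrimesOfHeight fun _ hP => not_le_of_mem_minimalPrimesOfHeight hP (hc _)
    refine ⟨Fin.snoc x y, ?_, ?_⟩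
    · rw [← Fin.snoc_init_self c]
      exact hx.snoc hy
    · rw [span_range_snoc]
      exact add_one_le_height_of_forall_notMem hxh hyT

end SuperficialSequence

section SystemOfParameters

variable {A M : Type*} [CommRing A] [AddCommGroup M] [Module A M]

lemma isFiniteLength_of_forall_isMaximal [IsNoetherianRing A] [Module.Finite A M]
    (hmax : ∀ P : Ideal A, P.IsPrime → Module.annihilator A M ≤ P → P.IsMaximal) :
    IsFiniteLength A M := by
  let K := Module.annihilator A M
  have hπ : Function.Surjective (Ideal.Quotient.mk K) := Ideal.Quotient.mk_surjective
  have : Ring.KrullDimLE 0 (A ⧸ K) := .mk₀ fun Q hQ => by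
    have hcomap : (Q.comap (Ideal.Quotient.mk K)).IsMaximal :=
      hmax _ (hQ.comap _) (Ideal.mk_ker.ge.trans (Ideal.comap_mono bot_le))
    have := Ideal.map_eq_top_or_isMaximal_of_surjective _ hπ hcomap
    rw [Ideal.map_comap_of_surjective _ hπ] at this
    exact this.resolve_left hQ.ne_top
  have : IsArtinianRing (A ⧸ K) :=
    isArtinianRing_iff_isNoetherianRing_krullDimLE_zero.2 ⟨inferInstance, this⟩
  have hK : Module.IsTorsionBySet A M K := Module.isTorsionBySet_annihilator A M
  let : Module (A ⧸ K) M := hK.module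
  have : IsScalarTower A (A ⧸ K) M := hK.isScalarTower
  have : Module.Finite (A ⧸ K) M := .of_restrictScalars_finite A _ M
  exact isFiniteLength_iff_isNoetherian_isArtinian.2
    ⟨inferInstance, isArtinian_of_surjective_algebraMap (R := A ⧸ K) hπ⟩

lemma le_annihilator_quotient_smul_top (J : Ideal A) :
    J ⊔ Module.annihilator A M ≤ Module.annihilator A (M ⧸ (J • (⊤ : Submodule A M))) := by
  refine sup_le (fun a ha => Module.mem_annihilator.2 ?_)
    (LinearMap.annihilator_le_of_surjective _ (Submodule.mkQ_surjective _))
  refine fun m => Submodule.Quotient.induction_on _ m fun m => ?_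
  rw [← Submodule.Quotient.mk_smul, Submodule.Quotient.mk_eq_zero]
  exact Submodule.smul_mem_smul ha Submodule.mem_top

lemma isMaximal_of_ringKrullDim_le_height {R S : Type*} [CommRing R] [CommRing S]
    [FiniteRingKrullDim S] {φ : R →+* S} (hφ : Function.Surjective φ) {J P : Ideal R} [P.IsPrime]
    (hJ : ringKrullDim S ≤ (J.map φ).height) (hJP : J ≤ P) (hker : RingHom.ker φ ≤ P) :
    P.IsMaximal := by
  have : (P.map φ).IsPrime := Ideal.map_isPrime_of_surjective hφ hker
  have hge : ringKrullDim S ≤ (P.map φ).height :=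
    hJ.trans (WithBot.coe_le_coe.2 (Ideal.height_mono (Ideal.map_mono hJP)))
  have : (P.map φ).IsMaximal :=
    Ideal.isMaximal_of_height_eq_ringKrullDim (Ideal.height_le_ringKrullDim_of_isPrime.antisymm hge)
  rw [← sup_eq_left.2 hker, ← Ideal.comap_map_of_surjective' φ hφ]
  exact Ideal.comap_isMaximal_of_surjective φ hφ

lemma isSOP_of_le_height [IsNoetherianRing A] [IsLocalRing A] [Module.Finite A M] {d : ℕ}
    (hdim : modDim A M = d) {x : Fin d → A} (hxm : ∀ j, x j ∈ maximalIdeal A)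
    (hx : d ≤ ((Ideal.span (Set.range x)).map
      (Ideal.Quotient.mk (Module.annihilator A M))).height) :
    IsSOP A M x := by
  refine ⟨hdim, hxm, isFiniteLength_of_forall_isMaximal fun P _ hP => ?_⟩
  have hle := (le_annihilator_quotient_smul_top _).trans hP
  rw [modDim] at hdim
  have : FiniteRingKrullDim (A ⧸ Module.annihilator A M) :=
    finiteRingKrullDim_iff_ne_bot_and_top.2
      (hdim ▸ ⟨WithBot.coe_ne_bot, WithBot.coe_injective.ne (ENat.natCast_ne_top d)⟩)
  refine isMaximal_of_ringKrullDim_le_height Ideal.Quotient.mk_surjective ?_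
    (le_sup_left.trans hle) (Ideal.mk_ker.trans_le (le_sup_right.trans hle))
  exact hdim ▸ WithBot.coe_le_coe.2 hx

lemma height_map_maximalIdeal {R S : Type*} [CommRing R] [IsLocalRing R] [CommRing S]
    [Nontrivial S] {φ : R →+* S} (hφ : Function.Surjective φ) :
    (((maximalIdeal R).map φ).height : WithBot ℕ∞) = ringKrullDim S := by
  have : IsLocalRing S := .of_surjective' φ hφ
  rw [map_maximalIdeal_of_surjective φ hφ, maximalIdeal_height_eq_ringKrullDim]

end SystemOfParameters

lemma exists_mem_apply_eq_of_eq_sup {ι α : Type*} [LinearOrder α] [OrderBot α] {t : Finset ι}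
    {f : ι → α} {a : α} (ha : a = t.sup f) (ha_ne_bot : a ≠ ⊥) : ∃ i ∈ t, f i = a := by
  have ht : t.Nonempty := Finset.nonempty_iff_ne_empty.2 fun ht =>
    ha_ne_bot (by rw [ha, ht, Finset.sup_empty])
  obtain ⟨i, hi, hfi⟩ := Finset.exists_mem_eq_sup t ht f
  exact ⟨i, hi, (ha.trans hfi).symm⟩

/-- Proposition 2.6(i).  With
`h = max_j ht((I j + Ann_A M)/Ann_A M)`, there exists a Rees superficial sequence
`x 1, …, x h` of `(I 1, …, I s)` with respect to `M` which is part of a system of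
parameters for `M`. -/
theorem exists_reesSuperficialSeq_part_of_sop
    (A : Type*) [CommRing A] [IsNoetherianRing A] [IsLocalRing A]
    [Infinite (ResidueField A)]
    (M : Type*) [AddCommGroup M] [Module A M] [Module.Finite A M]
    {s : ℕ} (I : Fin s → Ideal A)
    (d : ℕ) (hd : 0 < d) (hdim : modDim A M = (d : WithBot ℕ∞))
    (h : ℕ)
    (hh : (h : ℕ∞) = Finset.univ.sup fun j =>
      idealHeight (A ⧸ Module.annihilator A M)
        (Ideal.map (Ideal.Quotient.mk (Module.annihilator A M)) (I j))) :
    ∃ (x : Fin h → A) (c : Fin h → Fin s),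
      IsReesSuperficialSeq A M I x c ∧
      ∃ (y : Fin d → A) (f : Fin h ↪ Fin d),
        IsSOP A M y ∧ ∀ j, y (f j) = x j := by
  let π := Ideal.Quotient.mk (Module.annihilator A M)
  have hπ : Function.Surjective π := Ideal.Quotient.mk_surjective
  have attained (k : Fin h) : ∃ j, ((I j).map π).height = h := by
    have h_ne_bot : (h : ℕ∞) ≠ ⊥ := (Nat.cast_ne_zero.2 k.pos.ne').trans_eq bot_eq_zero.symm
    obtain ⟨j, -, hj⟩ := exists_mem_apply_eq_of_eq_sup hh h_ne_bot
    exact ⟨j, (idealHeight_eq_height _).symm.trans hj⟩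
  choose c hc using attained
  obtain ⟨x, hx, hxh⟩ := exists_isReesSuperficialSeq (I := I) M π c
    fun k => (Nat.cast_lt.2 k.is_lt).trans_eq (hc k).symm
  have hxm (k : Fin h) : x k ∈ maximalIdeal A :=
    le_maximalIdeal (fun htop => ENat.natCast_ne_top h <| by
      rw [← hc k, htop, Ideal.map_top, Ideal.height_top]) (hx k).1
  have : Nontrivial (A ⧸ Module.annihilator A M) :=
    PrimeSpectrum.nonempty_iff_nontrivial.1 <|
      Order.krullDim_ne_bot_iff.1 (hdim.trans_ne WithBot.coe_ne_bot)
  have hmd : ((maximalIdeal A).map π).height = d :=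
    WithBot.coe_injective ((height_map_maximalIdeal hπ).trans hdim)
  have hhd : h ≤ d := Nat.cast_le.1 <| hxh.trans <|
    (Ideal.height_mono (Ideal.map_mono (Ideal.span_le.2 (Set.range_subset_iff.2 hxm)))).trans_eq hmd
  obtain ⟨y, f, hym, hyd, hyf⟩ := exists_extension_le_height hhd hmd.ge hxm hxh
  exact ⟨x, c, hx, y, f, isSOP_of_le_height hdim hym hyd, hyf⟩
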